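/- arXiv:1509.07235 — 2 statements merged into one kernel-verified Lean document; each statement's English description precedes it below -/
import Mathlib

section
/- Let W be an L_n-injective R-module and let 0 → W → E^0 → E^1 → ⋯ → E^{m-1} → W' → 0 be exact with each E^i injective (so W' is an m-th cosyzygy of W). Then W' is L_{n+m}-injective. -/
open CategoryTheory

/-- Flatness of a module over an arbitrary (possibly noncommutative) ring,
via the equational criterion: every relation is a consequence of trivial relations. -/
def IsFlatMod (R : Type) [Ring R] (M : Type) [AddCommGroup M] [Module R M] : Prop :=
  ∀ (ι : Type) (_ : Fintype ι) (r : ι → R) (x : ι → M),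
    (∑ i, r i • x i = 0) →
      ∃ (κ : Type) (_ : Fintype κ) (a : ι → κ → R) (y : κ → M),
        (∀ i, x i = ∑ j, a i j • y j) ∧ ∀ j, (∑ i, r i * a i j) = 0

variable (R : Type) [Ring R]

/-- `Ext^n_R(M, N) = 0`. -/
def extVanish (n : ℕ) (M N : ModuleCat.{0} R) : Prop :=
  Subsingleton (((Ext ℤ (ModuleCat.{0} R) n).obj (Opposite.op M)).obj N)

/-- `M` has flat dimension at most `n`. -/
def fdLE : ℕ → ModuleCat.{0} R → Prop
  | 0, M => IsFlatMod R M
  | n+1, M => ∃ (K F : ModuleCat.{0} R) (f : K ⟶ F) (g : F ⟶ M),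
      IsFlatMod R F ∧ Function.Injective f ∧ Function.Surjective g ∧
        Function.Exact f g ∧ fdLE n K

/-- `W` is `L_n`-injective: `Ext^1_R(M, W) = 0` for every `M` of flat dimension at most `n`. -/
def LnInj (n : ℕ) (W : ModuleCat.{0} R) : Prop :=
  ∀ M : ModuleCat.{0} R, fdLE R n M → extVanish R 1 M W

/-- `Cosyzygy R m W W'` : `W'` is an `m`-th cosyzygy of `W`, i.e. there is an exact
sequence `0 → W → E^0 → ⋯ → E^{m-1} → W' → 0` with all `E^i` injective. -/
def Cosyzygy : ℕ → ModuleCat.{0} R → ModuleCat.{0} R → Prop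
  | 0, W, W' => ∃ e : W ⟶ W', Function.Bijective e
  | m+1, W, W' => ∃ (E C : ModuleCat.{0} R) (f : W ⟶ E) (g : E ⟶ C),
      Injective E ∧ Function.Injective f ∧ Function.Surjective g ∧
        Function.Exact f g ∧ Cosyzygy m C W'

/-- `extVanish` agrees in degree one with the vanishing of the Yoneda `Ext` group. -/
lemma extVanish_one_iff (M N : ModuleCat.{0} R) :
    extVanish R 1 M N ↔ Subsingleton (Abelian.Ext.{0} M N 1) := by
  let P := ProjectiveResolution.of M
  have h₁ : extVanish R 1 M N ↔ ∀ f : P.complex.X 1 ⟶ N, P.complex.d 2 1 ≫ f = 0 →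
      ∃ g : P.complex.X 0 ⟶ N, P.complex.d 1 0 ≫ g = f := by
    have e := (P.isoExt (R := ℤ) 1 N).toLinearEquiv.toEquiv
    rw [extVanish, e.subsingleton_congr, ← ModuleCat.isZero_iff_subsingleton,
      ← HomologicalComplex.exactAt_iff_isZero_homology,
      HomologicalComplex.exactAt_iff' _ 0 1 2 (by simp) (by simp),
      ShortComplex.moduleCat_exact_iff]
    rfl
  rw [h₁]
  constructor
  · refine fun h ↦ subsingleton_of_forall_eq 0 fun α ↦ ?_
    obtain ⟨f, hf, rfl⟩ := P.extMk_surjective α 2 rfl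
    exact (P.extMk_eq_zero_iff f 2 rfl hf 0 rfl).2 (h f hf)
  · exact fun h f hf ↦ (P.extMk_eq_zero_iff f 2 rfl hf 0 rfl).1 (Subsingleton.elim _ _)

variable {R}

/-- A module with at most one element is flat. -/
lemma IsFlatMod.of_subsingleton (M : Type) [AddCommGroup M] [Module R M] [Subsingleton M] :
    IsFlatMod R M :=
  fun _ _ _ _ _ ↦ ⟨PEmpty, inferInstance, fun _ j ↦ j.elim, fun j ↦ j.elim,
    fun _ ↦ Subsingleton.elim _ _, fun j ↦ j.elim⟩

/-- Free modules are flat. -/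
lemma IsFlatMod.finsupp (B : Type) : IsFlatMod R (B →₀ R) := by
  classical
  intro ι _ r x hx
  let S : Finset B := Finset.univ.biUnion fun i ↦ (x i).support
  refine ⟨S, inferInstance, fun i b ↦ x i b, fun b ↦ Finsupp.single b.1 1, fun i ↦ ?_,
    fun b ↦ by simpa using DFunLike.congr_fun hx b.1⟩
  have hS : (x i).support ⊆ S := Finset.subset_biUnion_of_mem (fun i ↦ (x i).support) (by simp)
  simp only [Finsupp.smul_single, smul_eq_mul, mul_one]
  rw [Finset.sum_coe_sort S (fun b ↦ Finsupp.single b (x i b))]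
  conv_lhs => rw [← Finsupp.sum_single (x i)]
  exact Finsupp.sum_of_support_subset _ hS _ (by simp)

/-- If a free module surjects onto a flat module, any element of the kernel is fixed by
an endomorphism with values in the kernel. -/
lemma IsFlatMod.exists_fix {B F : Type} [AddCommGroup F] [Module R F] (hF : IsFlatMod R F)
    (g : (B →₀ R) →ₗ[R] F) (hg : Function.Surjective g) (x : B →₀ R) (hx : g x = 0) :
    ∃ θ : (B →₀ R) →ₗ[R] (B →₀ R), (∀ p, g (θ p) = 0) ∧ θ x = x := by
  classical
  have hx' : x = ∑ b : x.support, x b • Finsupp.single (b : B) (1 : R) := by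
    rw [Finset.sum_coe_sort x.support (fun b ↦ x b • Finsupp.single b (1 : R))]
    conv_lhs => rw [← Finsupp.sum_single x]
    simp [Finsupp.sum]
  obtain ⟨κ, _, a, y, hy, ha⟩ := hF x.support inferInstance (fun b ↦ x b)
    (fun b ↦ g (Finsupp.single b 1)) (by
      simpa only [map_sum, map_smul] using (congrArg g hx').symm.trans hx)
  choose s hs using hg
  let v : B → (B →₀ R) := fun b ↦
    if h : b ∈ x.support then Finsupp.single b 1 - ∑ j, a ⟨b, h⟩ j • s (y j) else 0
  have hv : ∀ b, g (v b) = 0 := by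
    intro b
    by_cases h : b ∈ x.support
    · simp only [v, dif_pos h, map_sub, map_sum, map_smul, hs]
      rw [hy ⟨b, h⟩, sub_self]
    · simp only [v, dif_neg h, map_zero]
  refine ⟨Finsupp.linearCombination R v, fun p ↦ ?_, ?_⟩
  · simp [Finsupp.linearCombination_apply, Finsupp.sum, hv]
  · have hsum : ∑ b : x.support, x b • ∑ j, a b j • s (y j) = 0 := by
      simp only [Finset.smul_sum, smul_smul]
      rw [Finset.sum_comm]
      simp_rw [← Finset.sum_smul, ha, zero_smul, Finset.sum_const_zero]
    calc Finsupp.linearCombination R v x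
        = ∑ b : x.support, x b • v b := by
          rw [Finsupp.linearCombination_apply, Finsupp.sum,
            Finset.sum_coe_sort x.support (fun b ↦ x b • v b)]
      _ = ∑ b : x.support, (x b • Finsupp.single (b : B) (1 : R)
            - x b • ∑ j, a b j • s (y j)) := by
          refine Finset.sum_congr rfl fun b _ ↦ ?_
          simp only [v, dif_pos b.2, smul_sub]
      _ = x := by rw [Finset.sum_sub_distrib, hsum, sub_zero, ← hx']

/-- If a free module surjects onto a flat module, finitely many elements of the kernel are
simultaneously fixed by an endomorphism with values in the kernel. -/
lemma IsFlatMod.exists_fix_finset {B F ι : Type} [AddCommGroup F] [Module R F]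
    (hF : IsFlatMod R F) (g : (B →₀ R) →ₗ[R] F) (hg : Function.Surjective g) (s : Finset ι)
    (x : ι → (B →₀ R)) (hx : ∀ i, g (x i) = 0) :
    ∃ θ : (B →₀ R) →ₗ[R] (B →₀ R), (∀ p, g (θ p) = 0) ∧ ∀ i ∈ s, θ (x i) = x i := by
  classical
  induction s using Finset.induction_on with
  | empty => exact ⟨0, by simp, by simp⟩
  | insert i s _ ih =>
    obtain ⟨θ, hθ, hθs⟩ := ih
    obtain ⟨η, hη, hηi⟩ := hF.exists_fix g hg (x i - θ (x i)) (by simp [hx, hθ])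
    refine ⟨θ + η - η ∘ₗ θ, fun p ↦ by simp [hθ, hη], fun j hj ↦ ?_⟩
    rcases Finset.mem_insert.1 hj with rfl | hj
    · rw [map_sub] at hηi
      simp only [LinearMap.sub_apply, LinearMap.add_apply, LinearMap.comp_apply]
      rw [add_sub_assoc, hηi, add_sub_cancel]
    · simp [hθs j hj]

/-- The kernel of a surjection from a free module onto a flat module is flat. -/
lemma IsFlatMod.ker {B F : Type} [AddCommGroup F] [Module R F] (hF : IsFlatMod R F)
    (g : (B →₀ R) →ₗ[R] F) (hg : Function.Surjective g) :
    IsFlatMod R (LinearMap.ker g) := by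
  intro ι _ r x hx
  obtain ⟨κ, hκ, a, y, hy, ha⟩ := IsFlatMod.finsupp B ι inferInstance r (fun i ↦ (x i : B →₀ R))
    (by simpa using congrArg Subtype.val hx)
  obtain ⟨θ, hθ, hθx⟩ := hF.exists_fix_finset g hg Finset.univ (fun i ↦ (x i : B →₀ R))
    (fun i ↦ (x i).2)
  refine ⟨κ, hκ, a, fun j ↦ ⟨θ (y j), hθ _⟩, fun i ↦ Subtype.ext ?_, ha⟩
  rw [← hθx i (Finset.mem_univ i)]
  conv_lhs => rw [hy i]
  simp

/-- Flat modules have flat dimension at most `n` for every `n`. -/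
lemma IsFlatMod.fdLE (n : ℕ) (F : ModuleCat.{0} R) (hF : IsFlatMod R F) : fdLE R n F := by
  induction n generalizing F with
  | zero => exact hF
  | succ n ih =>
    refine ⟨ModuleCat.of R PUnit, F, 0, 𝟙 F, hF, fun _ _ _ ↦ rfl, fun x ↦ ⟨x, rfl⟩, ?_,
      ih _ (IsFlatMod.of_subsingleton PUnit)⟩
    exact fun x ↦ ⟨fun h ↦ ⟨0, by simpa using h.symm⟩, by rintro ⟨_, rfl⟩; simp⟩

open CategoryTheory.Abelian

/-- The short complex attached to an injective map and a surjective map that are exact. -/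
lemma exists_shortExact {A B C : ModuleCat.{0} R} (f : A ⟶ B) (g : B ⟶ C)
    (hf : Function.Injective f) (hg : Function.Surjective g) (h : Function.Exact f g) :
    ∃ w : f ≫ g = 0, (ShortComplex.mk f g w).ShortExact := by
  have w : f ≫ g = 0 := by ext x; exact h.apply_apply_eq_zero x
  exact ⟨w, { exact := (ShortComplex.ShortExact.moduleCat_exact_iff_function_exact _).2 h
              mono_f := (ModuleCat.mono_iff_injective f).2 hf
              epi_g := (ModuleCat.epi_iff_surjective g).2 hg }⟩

/-- `Ext²(F, W)` vanishes if `F` is flat and `W` is `L_n`-injective. -/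
lemma LnInj.subsingleton_ext_two_of_flat {n : ℕ} {W : ModuleCat.{0} R} (hW : LnInj R n W)
    (F : ModuleCat.{0} R) (hF : IsFlatMod R F) : Subsingleton (Abelian.Ext.{0} F W 2) := by
  let g : (F →₀ R) →ₗ[R] F := Finsupp.linearCombination R id
  have hg : Function.Surjective g := Finsupp.linearCombination_id_surjective R F
  obtain ⟨_, hS⟩ := exists_shortExact (A := ModuleCat.of R (LinearMap.ker g))
    (ModuleCat.ofHom (LinearMap.ker g).subtype)
    (ModuleCat.ofHom g) Subtype.val_injective hg (LinearMap.exact_subtype_ker_map g)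
  have : Projective (ModuleCat.of R (F →₀ R)) :=
    ModuleCat.projective_of_free Finsupp.basisSingleOne
  have := (extVanish_one_iff R _ _).1 (hW (ModuleCat.of R (LinearMap.ker g)) ((hF.ker g hg).fdLE n))
  refine subsingleton_of_forall_eq 0 fun α ↦ ?_
  obtain ⟨β, rfl⟩ := Ext.contravariant_sequence_exact₃ hS W α
    (Ext.eq_zero_of_projective _) (n₀ := 1) rfl
  rw [show β = 0 from Subsingleton.elim _ _, Ext.comp_zero]

/-- A cosyzygy of an `L_n`-injective module is `L_{n+1}`-injective. -/
lemma LnInj.of_shortExact {n : ℕ} {W E C : ModuleCat.{0} R} (hW : LnInj R n W) [Injective E]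
    (f : W ⟶ E) (g : E ⟶ C) (hf : Function.Injective f) (hg : Function.Surjective g)
    (h : Function.Exact f g) : LnInj R (n + 1) C := by
  rintro M ⟨K, F, i, p, hF, hi, hp, hip, hK⟩
  obtain ⟨_, hS⟩ := exists_shortExact f g hf hg h
  obtain ⟨_, hT⟩ := exists_shortExact i p hi hp hip
  have := (extVanish_one_iff R _ _).1 (hW K hK)
  have := hW.subsingleton_ext_two_of_flat F hF
  rw [extVanish_one_iff]
  refine subsingleton_of_forall_eq 0 fun α ↦ ?_
  have hα : α.comp hS.extClass (rfl : 1 + 1 = 2) = 0 := by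
    obtain ⟨β, hβ⟩ := Ext.contravariant_sequence_exact₃ hT W (α.comp hS.extClass rfl)
      (Subsingleton.elim _ _) (n₀ := 1) rfl
    rw [← hβ, show β = 0 from Subsingleton.elim _ _, Ext.comp_zero]
  obtain ⟨γ, rfl⟩ := Ext.covariant_sequence_exact₃ M hS α rfl hα
  rw [Ext.eq_zero_of_injective γ, Ext.zero_comp]

/-- `L_n`-injectivity is invariant under isomorphism. -/
lemma LnInj.of_iso {n : ℕ} {W W' : ModuleCat.{0} R} (hW : LnInj R n W) (e : W ≅ W') :
    LnInj R n W' := fun M hM ↦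
  ((((_root_.Ext ℤ (ModuleCat.{0} R) 1).obj (Opposite.op M)).mapIso
    e).toLinearEquiv.toEquiv.subsingleton_congr).1 (hW M hM)

variable (R)

/-- If `W` is `L_n`-injective and `W'` is an `m`-th cosyzygy of `W`,
then `W'` is `L_{n+m}`-injective. -/
theorem stmt6 (n m : ℕ) (W W' : ModuleCat.{0} R)
    (hW : LnInj R n W) (hcs : Cosyzygy R m W W') :
    LnInj R (n + m) W' := by
  induction m generalizing n W with
  | zero =>
    obtain ⟨e, he⟩ := hcs
    exact hW.of_iso (LinearEquiv.ofBijective e.hom he).toModuleIso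
  | succ m ih =>
    obtain ⟨E, C, f, g, _, hf, hg, h, hC⟩ := hcs
    rw [← Nat.add_assoc, Nat.add_right_comm]
    exact ih (n + 1) C (hW.of_shortExact f g hf hg h) hC
end

section
/- For any ring R and R-module M with n ≥ 1, fd_R(M) ≤ n if and only if Ext^{n+1}_R(M,C)=0 for every cotorsion R-module C. -/
open CategoryTheory

variable (R : Type) [Ring R]

/-- `C` is cotorsion: `Ext^1_R(F, C) = 0` for every flat module `F`. -/
def Cotorsion (C : ModuleCat.{0} R) : Prop :=
  ∀ F : ModuleCat.{0} R, IsFlatMod R F → extVanish R 1 F C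

/-- Vanishing of the derived-functor `Ext` agrees with vanishing of the derived-category `Ext`. -/
theorem extVanish_succ_iff (n : ℕ) (M N : ModuleCat.{0} R) :
    extVanish R (n + 1) M N ↔ Subsingleton (Abelian.Ext.{0} M N (n + 1)) := by
  let P := projectiveResolution M
  have h1 : extVanish R (n + 1) M N ↔ ∀ f : P.complex.X (n + 1) ⟶ N,
      P.complex.d (n + 2) (n + 1) ≫ f = 0 →
        ∃ g : P.complex.X n ⟶ N, P.complex.d (n + 1) n ≫ g = f := by
    unfold extVanish
    rw [← ModuleCat.isZero_iff_subsingleton, (P.isoExt (R := ℤ) (n + 1) N).isZero_iff,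
      ← HomologicalComplex.exactAt_iff_isZero_homology,
      HomologicalComplex.exactAt_iff' _ n (n + 1) (n + 2) (by simp) (by simp),
      ShortComplex.moduleCat_exact_iff]
    rfl
  rw [h1]
  constructor
  · intro h
    refine subsingleton_of_forall_eq 0 fun α => ?_
    obtain ⟨f, hf, rfl⟩ := P.extMk_surjective α (n + 2) rfl
    rw [P.extMk_eq_zero_iff f (n + 2) rfl hf n rfl]
    exact h f hf
  · intro h f hf
    rw [← P.extMk_eq_zero_iff f (n + 2) rfl hf n rfl]
    exact Subsingleton.elim _ _

variable {R}

section ShortExact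

variable {S : ShortComplex (ModuleCat.{0} R)} (hS : S.ShortExact) (C : ModuleCat.{0} R)
include hS

theorem subsingleton_ext_X₃_of_X₁_of_X₂ (n : ℕ)
    (h₁ : Subsingleton (Abelian.Ext.{0} S.X₁ C n))
    (h₂ : Subsingleton (Abelian.Ext.{0} S.X₂ C (n + 1))) :
    Subsingleton (Abelian.Ext.{0} S.X₃ C (n + 1)) := by
  refine subsingleton_of_forall_eq 0 fun x => ?_
  obtain ⟨y, rfl⟩ := Abelian.Ext.contravariant_sequence_exact₃ hS C x
    (Subsingleton.elim _ _) (add_comm 1 n)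
  rw [Subsingleton.elim y 0, Abelian.Ext.comp_zero]

theorem subsingleton_ext_X₁_of_X₂_of_X₃ (n : ℕ)
    (h₂ : Subsingleton (Abelian.Ext.{0} S.X₂ C n))
    (h₃ : Subsingleton (Abelian.Ext.{0} S.X₃ C (n + 1))) :
    Subsingleton (Abelian.Ext.{0} S.X₁ C n) := by
  refine subsingleton_of_forall_eq 0 fun x => ?_
  obtain ⟨y, rfl⟩ := Abelian.Ext.contravariant_sequence_exact₁ hS C x (add_comm 1 n)
    (Subsingleton.elim _ _)
  rw [Subsingleton.elim y 0, Abelian.Ext.comp_zero]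

theorem exists_extension_of_subsingleton_ext_one
    (h₃ : Subsingleton (Abelian.Ext.{0} S.X₃ C 1)) (u : S.X₁ ⟶ C) :
    ∃ v : S.X₂ ⟶ C, S.f ≫ v = u := by
  obtain ⟨y, hy⟩ := Abelian.Ext.contravariant_sequence_exact₁ hS C (Abelian.Ext.mk₀ u)
    (add_zero 1) (Subsingleton.elim _ _)
  obtain ⟨v, rfl⟩ := (Abelian.Ext.mk₀_bijective _ _).2 y
  rw [Abelian.Ext.mk₀_comp_mk₀] at hy
  exact ⟨v, (Abelian.Ext.mk₀_bijective _ _).1 hy⟩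

theorem subsingleton_ext_one_of_exists_extension [Projective S.X₂]
    (h : ∀ u : S.X₁ ⟶ C, ∃ v : S.X₂ ⟶ C, S.f ≫ v = u) :
    Subsingleton (Abelian.Ext.{0} S.X₃ C 1) := by
  refine subsingleton_of_forall_eq 0 fun x => ?_
  obtain ⟨y, rfl⟩ := Abelian.Ext.contravariant_sequence_exact₃ hS C x
    (Abelian.Ext.eq_zero_of_projective _) (add_zero 1)
  obtain ⟨u, rfl⟩ := (Abelian.Ext.mk₀_bijective _ _).2 y
  obtain ⟨v, rfl⟩ := h u
  rw [← Abelian.Ext.mk₀_comp_mk₀, hS.extClass_comp_assoc]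

end ShortExact

section Presentation

variable (M : ModuleCat.{0} R)

/-- The presentation of `M` by the free module on its underlying set. -/
noncomputable def freePresentation : ShortComplex (ModuleCat.{0} R) :=
  ShortComplex.mk (X₁ := ModuleCat.of R (LinearMap.ker (Finsupp.linearCombination R (id : M → M))))
    (X₂ := ModuleCat.of R (M →₀ R)) (X₃ := M)
    (ModuleCat.ofHom (Submodule.subtype _))
    (ModuleCat.ofHom (Finsupp.linearCombination R (id : M → M)))
    (ModuleCat.hom_ext (LinearMap.ext fun x => x.2))

theorem freePresentation_shortExact : (freePresentation M).ShortExact where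
  exact := by
    rw [ShortComplex.moduleCat_exact_iff]
    exact fun x hx => ⟨⟨x, hx⟩, rfl⟩
  mono_f := (ModuleCat.mono_iff_injective _).2 Subtype.val_injective
  epi_g := (ModuleCat.epi_iff_surjective _).2 (Finsupp.linearCombination_id_surjective R M)

instance : Projective (freePresentation M).X₂ :=
  ModuleCat.projective_of_free (Finsupp.basisSingleOne (R := R) (ι := M))

end Presentation

section Flat

theorem isFlatMod_finsupp (α : Type) : IsFlatMod R (α →₀ R) := by
  classical
  intro ι _ r x hx
  let s : Finset α := Finset.univ.biUnion fun i => (x i).support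
  refine ⟨s, inferInstance, fun i j => x i j, fun j => Finsupp.single j 1, fun i => ?_,
    fun j => ?_⟩
  · have h : (x i).support ⊆ s := Finset.subset_biUnion_of_mem (fun i => (x i).support)
      (Finset.mem_univ i)
    conv_lhs => rw [← Finsupp.sum_single (x i), Finsupp.sum_of_support_subset _ h _ (by simp)]
    rw [← Finset.sum_coe_sort s]
    simp
  · simpa using DFunLike.congr_fun hx (j : α)

/-- The equational criterion for finite systems of relations. -/
theorem IsFlatMod.exists_of_system {M : Type} [AddCommGroup M] [Module R M] (hM : IsFlatMod R M)
    {σ : Type} (s : Finset σ) {ι : Type} [Fintype ι] (r : σ → ι → R) (x : ι → M)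
    (h : ∀ k ∈ s, ∑ i, r k i • x i = 0) :
    ∃ (κ : Type) (_ : Fintype κ) (a : ι → κ → R) (y : κ → M),
      (∀ i, x i = ∑ j, a i j • y j) ∧ ∀ k ∈ s, ∀ j, ∑ i, r k i * a i j = 0 := by
  classical
  induction s using Finset.induction_on with
  | empty => exact ⟨ι, inferInstance, fun i j => if i = j then 1 else 0, x, by simp, by simp⟩
  | insert k s hk ih =>
    obtain ⟨κ, _, a, y, hx, ha⟩ := ih fun l hl => h l (Finset.mem_insert_of_mem hl)
    have hy : ∑ j, (∑ i, r k i * a i j) • y j = 0 := by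
      rw [← h k (Finset.mem_insert_self k s)]
      simp_rw [Finset.sum_smul, hx, Finset.smul_sum, mul_smul]
      exact Finset.sum_comm
    obtain ⟨μ, _, b, z, hyz, hb⟩ := hM κ inferInstance _ y hy
    refine ⟨μ, inferInstance, fun i l => ∑ j, a i j * b j l, z, fun i => ?_, fun l hl m => ?_⟩
    · rw [hx i]
      simp_rw [hyz, Finset.smul_sum, Finset.sum_smul, mul_smul]
      exact Finset.sum_comm
    · have e : ∑ i, r l i * ∑ j, a i j * b j m = ∑ j, (∑ i, r l i * a i j) * b j m := by
        simp_rw [Finset.mul_sum, Finset.sum_mul, mul_assoc]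
        exact Finset.sum_comm
      rw [e]
      rcases Finset.mem_insert.1 hl with rfl | hl
      · exact hb m
      · simp [ha l hl]

variable {K P F : Type} [AddCommGroup K] [AddCommGroup P] [AddCommGroup F]
  [Module R K] [Module R P] [Module R F] {f : K →ₗ[R] P} {g : P →ₗ[R] F}

theorem IsFlatMod.of_exact (hP : IsFlatMod R P) (hF : IsFlatMod R F)
    (hf : Function.Injective f) (hg : Function.Surjective g) (hfg : Function.Exact f g) :
    IsFlatMod R K := by
  intro ι _ r x hx
  obtain ⟨κ, _, a, y, hxy, ha⟩ := hP ι inferInstance r (fun i => f (x i)) (by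
    simpa using congrArg f hx)
  obtain ⟨μ, _, b, z, hyz, hb⟩ := hF.exists_of_system Finset.univ a (fun j => g (y j))
    fun i _ => by
      have := congrArg g (hxy i)
      rw [hfg.apply_apply_eq_zero] at this
      simpa using this.symm
  choose w hw using fun l => hg (z l)
  have hk : ∀ j, ∃ k, f k = y j - ∑ l, b j l • w l := fun j =>
    (hfg _).1 (by simp [hw, hyz j])
  choose k hk using hk
  refine ⟨κ, inferInstance, a, k, fun i => hf ?_, ha⟩
  have e : ∑ j, a i j • ∑ l, b j l • w l = 0 := by
    simp_rw [Finset.smul_sum, ← mul_smul]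
    rw [Finset.sum_comm]
    refine Finset.sum_eq_zero fun l _ => ?_
    rw [← Finset.sum_smul, hb i (Finset.mem_univ i), zero_smul]
  rw [hxy i, map_sum]
  simp_rw [map_smul, hk, smul_sub, Finset.sum_sub_distrib, e, sub_zero]

end Flat

section Character

variable {ι : Type} (r : ι → R)

/-- The character module of the right `R`-module `R / ∑ i, r i R`. -/
def annChar : AddSubgroup (R →+ AddCircle (1 : ℚ)) where
  carrier := {c | ∀ i a, c (r i * a) = 0}
  zero_mem' := by simp
  add_mem' := by
    intro c d hc hd i a
    simp [hc i a, hd i a]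
  neg_mem' := by
    intro c hc i a
    simp [hc i a]

instance : Module R (annChar r) where
  smul s c := ⟨c.1.comp (AddMonoidHom.mulRight s), fun i a => by
    simpa [mul_assoc] using c.2 i (a * s)⟩
  one_smul c := Subtype.ext (AddMonoidHom.ext fun a => congrArg c.1 (mul_one a))
  mul_smul s t c := Subtype.ext (AddMonoidHom.ext fun a => congrArg c.1 (mul_assoc a s t).symm)
  smul_zero _ := rfl
  smul_add _ _ _ := rfl
  add_smul s t c := Subtype.ext (AddMonoidHom.ext fun a =>
    (congrArg c.1 (mul_add a s t)).trans (map_add c.1 _ _))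
  zero_smul c := Subtype.ext (AddMonoidHom.ext fun a =>
    (congrArg c.1 (mul_zero a)).trans (map_zero c.1))

theorem annChar_smul_apply (s : R) (c : annChar r) (a : R) : (s • c).1 a = c.1 (a * s) := rfl

variable {L P F : Type} [AddCommGroup L] [AddCommGroup P] [AddCommGroup F]
  [Module R L] [Module R P] [Module R F]

/-- The linear map into `annChar r` corresponding to a character killing every `r i • x`. -/
def toAnnChar (χ : L →+ AddCircle (1 : ℚ)) (hχ : ∀ i x, χ (r i • x) = 0) :
    L →ₗ[R] annChar r where
  toFun x := ⟨χ.comp ((smulAddHom R L).flip x), fun i a => by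
    simpa [mul_smul] using hχ i (a • x)⟩
  map_add' x y := Subtype.ext (AddMonoidHom.ext fun a =>
    (congrArg χ (smul_add a x y)).trans (map_add χ _ _))
  map_smul' s x := Subtype.ext (AddMonoidHom.ext fun a => congrArg χ (mul_smul a s x).symm)

variable [Fintype ι]

/-- The image of `(x i) ↦ ∑ i, r i • x i`. -/
def smulRange (L : Type) [AddCommGroup L] [Module R L] : AddSubgroup L :=
  AddMonoidHom.range (∑ i, (DistribSMul.toAddMonoidHom L (r i)).comp
    (Pi.evalAddMonoidHom (fun _ : ι => L) i))

theorem mem_smulRange {x : L} : x ∈ smulRange r L ↔ ∃ l : ι → L, ∑ i, r i • l i = x := by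
  simp [smulRange, AddMonoidHom.mem_range, AddMonoidHom.finsetSum_apply]

theorem smul_mem_smulRange (i : ι) (x : L) : r i • x ∈ smulRange r L := by
  classical
  refine (mem_smulRange r).2 ⟨Pi.single i x, ?_⟩
  rw [Finset.sum_eq_single i] <;> simp +contextual

variable {f : L →ₗ[R] P} {g : P →ₗ[R] F}

theorem mem_smulRange_of_isFlatMod (hF : IsFlatMod R F) (hf : Function.Injective f)
    (hg : Function.Surjective g) (hfg : Function.Exact f g) {x : L}
    (hx : f x ∈ smulRange r P) : x ∈ smulRange r L := by
  obtain ⟨p, hp⟩ := (mem_smulRange r).1 hx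
  obtain ⟨κ, _, a, y, hy, ha⟩ := hF ι inferInstance r (fun i => g (p i)) (by
    simpa [hfg.apply_apply_eq_zero] using congrArg g hp)
  choose w hw using fun j => hg (y j)
  have hl : ∀ i, ∃ l, f l = p i - ∑ j, a i j • w j := fun i =>
    (hfg _).1 (by simp [hw, hy i])
  choose l hl using hl
  refine (mem_smulRange r).2 ⟨l, hf ?_⟩
  have e : ∑ i, r i • ∑ j, a i j • w j = 0 := by
    simp_rw [Finset.smul_sum, ← mul_smul]
    rw [Finset.sum_comm]
    refine Finset.sum_eq_zero fun j _ => ?_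
    rw [← Finset.sum_smul, ha, zero_smul]
  rw [map_sum]
  simp_rw [map_smul, hl, smul_sub, Finset.sum_sub_distrib, e, sub_zero, hp]

theorem exists_extension_annChar (hF : IsFlatMod R F) (hf : Function.Injective f)
    (hg : Function.Surjective g) (hfg : Function.Exact f g) (u : L →ₗ[R] annChar r) :
    ∃ v : P →ₗ[R] annChar r, v.comp f = u := by
  let χ : L →+ AddCircle (1 : ℚ) :=
    ((AddMonoidHom.eval (1 : R)).comp (annChar r).subtype).comp u.toAddMonoidHom
  have hχr : ∀ x ∈ smulRange r L, χ x = 0 := by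
    intro x hx
    obtain ⟨l, rfl⟩ := (mem_smulRange r).1 hx
    rw [map_sum]
    refine Finset.sum_eq_zero fun i _ => ?_
    change (u (r i • l i)).1 1 = 0
    rw [map_smul, annChar_smul_apply, one_mul]
    simpa using (u (l i)).2 i 1
  let φ : L ⧸ smulRange r L →+ P ⧸ smulRange r P :=
    QuotientAddGroup.map _ _ f.toAddMonoidHom fun x hx => by
      obtain ⟨l, rfl⟩ := (mem_smulRange r).1 hx
      exact (mem_smulRange r).2 ⟨fun i => f (l i), by simp⟩
  have hφ : Function.Injective φ := by
    rw [injective_iff_map_eq_zero]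
    intro q
    induction q using QuotientAddGroup.induction_on with
    | H x =>
      intro hx
      exact (QuotientAddGroup.eq_zero_iff _).2
        (mem_smulRange_of_isFlatMod r hF hf hg hfg ((QuotientAddGroup.eq_zero_iff _).1 hx))
  obtain ⟨ψ, hψ⟩ := CharacterModule.dual_surjective_of_injective φ.toIntLinearMap hφ
    (QuotientAddGroup.lift _ χ hχr)
  let ψ' : P ⧸ smulRange r P →+ AddCircle (1 : ℚ) := ψ
  have hψ' : ∀ x, ψ' (QuotientAddGroup.mk (f x)) = χ x := fun x =>
    DFunLike.congr_fun hψ (QuotientAddGroup.mk x)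
  refine ⟨toAnnChar r (ψ'.comp (QuotientAddGroup.mk' _)) fun i x => ?_, ?_⟩
  · change ψ' (QuotientAddGroup.mk (r i • x)) = 0
    rw [(QuotientAddGroup.eq_zero_iff _).2 (smul_mem_smulRange r i x), map_zero]
  · refine LinearMap.ext fun x => Subtype.ext (AddMonoidHom.ext fun a => ?_)
    change ψ' (QuotientAddGroup.mk (a • f x)) = _
    rw [← map_smul, hψ']
    change (u (a • x)).1 1 = _
    rw [map_smul, annChar_smul_apply, one_mul]

theorem mem_smulRange_of_exists_extension
    (h : ∀ u : L →ₗ[R] annChar r, ∃ v : P →ₗ[R] annChar r, v.comp f = u) {x : L}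
    (hx : f x ∈ smulRange r P) : x ∈ smulRange r L := by
  by_contra hn
  obtain ⟨c, hc⟩ := CharacterModule.exists_character_apply_ne_zero_of_ne_zero
    (mt (QuotientAddGroup.eq_zero_iff x).1 hn)
  let c' : L ⧸ smulRange r L →+ AddCircle (1 : ℚ) := c
  obtain ⟨v, hv⟩ := h (toAnnChar r (c'.comp (QuotientAddGroup.mk' _)) fun i y => by
    change c' (QuotientAddGroup.mk (r i • y)) = 0
    rw [(QuotientAddGroup.eq_zero_iff _).2 (smul_mem_smulRange r i y), map_zero])
  obtain ⟨p, hp⟩ := (mem_smulRange r).1 hx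
  have h1 : (v (f x)).1 1 = c' (QuotientAddGroup.mk x) := by
    have := congrArg (fun w : annChar r => w.1 1) (LinearMap.congr_fun hv x)
    refine this.trans ?_
    change c' (QuotientAddGroup.mk ((1 : R) • x)) = _
    rw [one_smul]
  apply hc
  refine h1.symm.trans ?_
  rw [← hp, map_sum, AddSubgroup.val_finsetSum, AddMonoidHom.finsetSum_apply]
  refine Finset.sum_eq_zero fun i _ => ?_
  rw [map_smul, annChar_smul_apply, one_mul]
  simpa using (v (p i)).2 i 1

theorem isFlatMod_of_exists_extension (hP : IsFlatMod R P) (hg : Function.Surjective g)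
    (hfg : Function.Exact f g)
    (h : ∀ (ι : Type) (_ : Fintype ι) (r : ι → R) (u : L →ₗ[R] annChar r),
      ∃ v : P →ₗ[R] annChar r, v.comp f = u) :
    IsFlatMod R F := by
  intro ι _ r x hx
  choose p hp using fun i => hg (x i)
  obtain ⟨l, hl⟩ := (hfg (∑ i, r i • p i)).1 (by simp [hp, hx])
  obtain ⟨k, hk⟩ := (mem_smulRange r).1 (mem_smulRange_of_exists_extension r (h ι inferInstance r)
    ((mem_smulRange r).2 ⟨p, hl.symm⟩))
  obtain ⟨κ, _, a, y, hy, ha⟩ := hP ι inferInstance r (fun i => p i - f (k i)) (by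
    simp_rw [smul_sub, Finset.sum_sub_distrib, ← hl, ← hk, map_sum, map_smul, sub_self])
  refine ⟨κ, inferInstance, a, fun j => g (y j), fun i => ?_, ha⟩
  simpa [hfg.apply_apply_eq_zero, hp] using congrArg g (hy i)

end Character

section Cotorsion

variable (M : ModuleCat.{0} R)

theorem freePresentation_f_injective : Function.Injective (freePresentation M).f.hom :=
  (freePresentation_shortExact M).moduleCat_injective_f

theorem freePresentation_g_surjective : Function.Surjective (freePresentation M).g.hom :=
  (freePresentation_shortExact M).moduleCat_surjective_g

theorem freePresentation_function_exact :
    Function.Exact (freePresentation M).f.hom (freePresentation M).g.hom :=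
  (ShortComplex.ShortExact.moduleCat_exact_iff_function_exact _).1
    (freePresentation_shortExact M).exact

theorem isFlatMod_freePresentation_X₂ : IsFlatMod R (freePresentation M).X₂ :=
  isFlatMod_finsupp M

theorem cotorsion_annChar {ι : Type} [Fintype ι] (r : ι → R) :
    Cotorsion R (ModuleCat.of R (annChar r)) := by
  intro F hF
  rw [extVanish_succ_iff R 0]
  refine subsingleton_ext_one_of_exists_extension (freePresentation_shortExact F) _ fun u => ?_
  obtain ⟨v, hv⟩ := exists_extension_annChar r (F := F) hF (freePresentation_f_injective F)
    (freePresentation_g_surjective F) (freePresentation_function_exact F) u.hom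
  exact ⟨ModuleCat.ofHom v, ModuleCat.hom_ext hv⟩

theorem isFlatMod_of_forall_cotorsion
    (h : ∀ C : ModuleCat.{0} R, Cotorsion R C → extVanish R 1 M C) : IsFlatMod R M := by
  refine isFlatMod_of_exists_extension (isFlatMod_freePresentation_X₂ M)
    (freePresentation_g_surjective M) (freePresentation_function_exact M) fun ι _ r u => ?_
  obtain ⟨v, hv⟩ := exists_extension_of_subsingleton_ext_one (freePresentation_shortExact M) _
    ((extVanish_succ_iff R 0 _ _).1 (h _ (cotorsion_annChar r))) (ModuleCat.ofHom u)
  exact ⟨v.hom, congrArg ModuleCat.Hom.hom hv⟩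

theorem fdLE_of_forall_cotorsion (n : ℕ)
    (h : ∀ C : ModuleCat.{0} R, Cotorsion R C → extVanish R (n + 1) M C) : fdLE R n M := by
  induction n generalizing M with
  | zero => exact isFlatMod_of_forall_cotorsion M h
  | succ n ih =>
    refine ⟨_, _, (freePresentation M).f, (freePresentation M).g,
      isFlatMod_freePresentation_X₂ M, freePresentation_f_injective M,
      freePresentation_g_surjective M, freePresentation_function_exact M, ih _ fun C hC => ?_⟩
    rw [extVanish_succ_iff]
    exact subsingleton_ext_X₁_of_X₂_of_X₃ (freePresentation_shortExact M) C _
      (Abelian.Ext.subsingleton_of_projective _ _ _) ((extVanish_succ_iff R _ _ _).1 (h C hC))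

variable {C : ModuleCat.{0} R} (hC : Cotorsion R C)
include hC

theorem extVanish_of_isFlatMod (hM : IsFlatMod R M) (n : ℕ) : extVanish R (n + 1) M C := by
  induction n generalizing M with
  | zero => exact hC M hM
  | succ n ih =>
    rw [extVanish_succ_iff]
    refine subsingleton_ext_X₃_of_X₁_of_X₂ (freePresentation_shortExact M) C _
      ((extVanish_succ_iff R _ _ _).1 (ih _ ?_)) (Abelian.Ext.subsingleton_of_projective _ _ _)
    exact (isFlatMod_freePresentation_X₂ M).of_exact (F := M) hM
      (freePresentation_f_injective M) (freePresentation_g_surjective M)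
      (freePresentation_function_exact M)

theorem extVanish_of_fdLE (n : ℕ) (hM : fdLE R n M) : extVanish R (n + 1) M C := by
  induction n generalizing M with
  | zero => exact hC M hM
  | succ n ih =>
    obtain ⟨K, F, f, g, hF, hf, hg, hfg, hK⟩ := hM
    let S : ShortComplex (ModuleCat.{0} R) :=
      ShortComplex.mk f g (ModuleCat.hom_ext (LinearMap.ext hfg.apply_apply_eq_zero))
    have hS : S.ShortExact :=
      { exact := (ShortComplex.ShortExact.moduleCat_exact_iff_function_exact S).2 hfg
        mono_f := (ModuleCat.mono_iff_injective f).2 hf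
        epi_g := (ModuleCat.epi_iff_surjective g).2 hg }
    rw [extVanish_succ_iff]
    exact subsingleton_ext_X₃_of_X₁_of_X₂ hS C _ ((extVanish_succ_iff R _ _ _).1 (ih K hK))
      ((extVanish_succ_iff R _ _ _).1 (extVanish_of_isFlatMod F hC hF _))

end Cotorsion

variable (R)

/-- For `n ≥ 1`, `fd_R M ≤ n` iff `Ext^{n+1}_R(M, C) = 0` for every cotorsion module `C`. -/
theorem stmt8 (n : ℕ) (hn : 1 ≤ n) (M : ModuleCat.{0} R) :
    fdLE R n M ↔ ∀ C : ModuleCat.{0} R, Cotorsion R C → extVanish R (n + 1) M C :=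
  ⟨fun h _ hC => extVanish_of_fdLE M hC n h, fdLE_of_forall_cotorsion M n⟩
end
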